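/- Let K be a bounded linear operator on L_p(X,π) such that K^i is compact for some i ∈ ℕ, and such that Kf > 0 π-almost everywhere whenever f ∈ L_p(X,π) satisfies f > 0 π-almost everywhere. Then for every h ∈ L_p(X,π) with h > 0 π-almost everywhere, ρ(K) = lim_{n→∞} ( ∫ |K^n h|^p dπ )^{1/(p n)}. -/

import Mathlib

open MeasureTheory Filter Topology ENNReal

/-- The spectral radius of a bounded linear operator, via the Gelfand formula
`ρ(K) = lim_n ‖K^n‖^(1/n) = inf_{n ≥ 1} ‖K^n‖^(1/n)`. -/
noncomputable def specRad {E : Type*} [NormedAddCommGroup E] [NormedSpace ℝ E]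
    (K : E →L[ℝ] E) : ℝ := ⨅ n : ℕ, ‖K ^ (n + 1)‖ ^ (1 / (n + 1) : ℝ)

/-!
Write `ρ = specRad K`. Since `‖K ^ n h‖ ≤ ‖K ^ n‖ ‖h‖`, Gelfand's formula gives the upper bound, and
the point is to show that `‖K ^ n h‖` is not exponentially smaller than `ρ ^ n`.

The function `h` is a quasi-interior point of `L_p`, so the relatively compact set `K ^ i (ball)`
lies below a multiple `m h` up to an error of norm `ε`. Positivity of `K ^ n` turns this into
`‖K ^ (n + i)‖ ≤ m ‖K ^ n h‖ + ε ‖K ^ n‖`. Iterating it `k` times bounds `ρ ^ (n + k i)` by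
`C M ^ k ‖K ^ n h‖ + ε ^ k ‖K‖ ^ n`, where `M` bounds the growth of `‖K ^ n h‖` over `i` steps. Take
`k ≈ n / q`: for `q` large the loss `(M / ρ ^ i) ^ k` has an arbitrarily small exponential rate, and
`ε`, chosen after `q`, makes the last term at most half of the left-hand side.
-/

section GelfandFormula

open Polynomial

/-- The pullback of the norm of `R` along evaluation at `x`. It places the powers of `x` in a
commutative ring, as the theory of `smoothingFun` requires; coefficients in `ℤ` impose no algebra
structure on `R`. -/
noncomputable def evalSeminorm {R : Type*} [SeminormedRing R] (x : R) : RingSeminorm ℤ[X] where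
  toFun q := ‖aeval x q‖
  map_zero' := by simp only [map_zero, norm_zero]
  add_le' q r := by simpa only [map_add] using norm_add_le (aeval x q) (aeval x r)
  neg' q := by simp only [map_neg, norm_neg]
  mul_le' q r := by simpa only [map_mul] using norm_mul_le (aeval x q) (aeval x r)

lemma evalSeminorm_X_pow {R : Type*} [SeminormedRing R] (x : R) (n : ℕ) :
    evalSeminorm x (X ^ n) = ‖x ^ n‖ :=
  congrArg norm (aeval_X_pow x)

theorem tendsto_norm_pow_rpow_iInf {R : Type*} [SeminormedRing R] (h_one : ‖(1 : R)‖ ≤ 1) (x : R) :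
    Tendsto (fun n : ℕ => ‖x ^ n‖ ^ (1 / n : ℝ)) atTop
      (𝓝 (⨅ n : ℕ, ‖x ^ (n + 1)‖ ^ (1 / (n + 1) : ℝ))) := by
  have h_eval_one : evalSeminorm x 1 ≤ 1 := (congrArg norm (map_one (aeval x))).trans_le h_one
  have h_iInf : smoothingFun (evalSeminorm x) X =
      ⨅ n : ℕ, ‖x ^ (n + 1)‖ ^ (1 / (n + 1) : ℝ) := by
    refine Equiv.pnatEquivNat.iInf_congr fun n => ?_
    rw [Equiv.pnatEquivNat_apply, evalSeminorm_X_pow, ← Nat.cast_succ, Nat.succ_eq_add_one,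
      PNat.natPred_add_one]
  have h_lim := tendsto_smoothingFun_of_map_one_le_one (evalSeminorm x) h_eval_one X
  rw [h_iInf] at h_lim
  exact h_lim.congr fun n => by rw [smoothingSeminormSeq, evalSeminorm_X_pow]

variable {E : Type*} [NormedAddCommGroup E] [NormedSpace ℝ E]

theorem tendsto_norm_pow_rpow_specRad (K : E →L[ℝ] E) :
    Tendsto (fun n : ℕ => ‖K ^ n‖ ^ (1 / n : ℝ)) atTop (𝓝 (specRad K)) :=
  tendsto_norm_pow_rpow_iInf ContinuousLinearMap.norm_id_le K

lemma specRad_nonneg (K : E →L[ℝ] E) : 0 ≤ specRad K :=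
  Real.iInf_nonneg fun _ => by positivity

lemma specRad_pow_le_norm_pow (K : E →L[ℝ] E) {n : ℕ} (hn : n ≠ 0) :
    specRad K ^ n ≤ ‖K ^ n‖ := by
  obtain ⟨k, rfl⟩ := Nat.exists_eq_succ_of_ne_zero hn
  have h_bdd : BddBelow (Set.range fun n : ℕ => ‖K ^ (n + 1)‖ ^ (1 / (n + 1) : ℝ)) :=
    ⟨0, by rintro _ ⟨n, rfl⟩; positivity⟩
  have h_le : specRad K ≤ ‖K ^ (k + 1)‖ ^ ((k + 1 : ℕ) : ℝ)⁻¹ := by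
    simpa only [specRad, one_div, Nat.cast_succ] using ciInf_le h_bdd k
  calc specRad K ^ (k + 1) ≤ (‖K ^ (k + 1)‖ ^ ((k + 1 : ℕ) : ℝ)⁻¹) ^ (k + 1) :=
        pow_le_pow_left₀ (specRad_nonneg K) h_le _
    _ = ‖K ^ (k + 1)‖ := Real.rpow_inv_natCast_pow (norm_nonneg _) hn

end GelfandFormula

section GrowthOfSequences

variable {a b : ℕ → ℝ} {i : ℕ} {ρ : ℝ}

lemma tendsto_const_rpow_one_div {c : ℝ} (hc : 0 < c) :
    Tendsto (fun n : ℕ => c ^ (1 / n : ℝ)) atTop (𝓝 1) := by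
  simpa only [Real.rpow_zero] using
    tendsto_const_nhds.rpow (tendsto_const_div_atTop_nhds_zero_nat (1 : ℝ)) (Or.inl hc.ne')

lemma const_mul_pow_rpow_one_div {c s : ℝ} (hc : 0 ≤ c) (hs : 0 ≤ s) {n : ℕ} (hn : n ≠ 0) :
    (c * s ^ n) ^ (1 / n : ℝ) = c ^ (1 / n : ℝ) * s := by
  rw [Real.mul_rpow hc (by positivity), one_div, Real.pow_rpow_inv_natCast hs hn]

theorem tendsto_rpow_one_div_of_le_of_pow_le {C : ℝ} (hb : ∀ n, 0 ≤ b n)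
    (ha : Tendsto (fun n : ℕ => a n ^ (1 / n : ℝ)) atTop (𝓝 ρ))
    (hC : 0 < C) (hba : ∀ n, b n ≤ C * a n)
    (hpow : ∀ s, 0 < s → s < ρ → ∃ c > 0, ∀ n ≠ 0, c * s ^ n ≤ b n) :
    Tendsto (fun n : ℕ => b n ^ (1 / n : ℝ)) atTop (𝓝 ρ) := by
  refine tendsto_order.2 ⟨fun l hl => ?_, fun u hu => ?_⟩
  · rcases lt_or_ge l 0 with hl_neg | hl_nonneg
    · exact Eventually.of_forall fun n => hl_neg.trans_le (Real.rpow_nonneg (hb n) _)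
    obtain ⟨s, hls, hsρ⟩ := exists_between hl
    have hs : 0 < s := hl_nonneg.trans_lt hls
    obtain ⟨c, hc, hcb⟩ := hpow s hs hsρ
    have h_lim : Tendsto (fun n : ℕ => c ^ (1 / n : ℝ) * s) atTop (𝓝 s) := by
      simpa only [one_mul] using (tendsto_const_rpow_one_div hc).mul_const s
    filter_upwards [h_lim.eventually_const_lt hls, eventually_ne_atTop 0] with n hn hn0
    rw [← const_mul_pow_rpow_one_div hc.le hs.le hn0] at hn
    exact hn.trans_le (Real.rpow_le_rpow (by positivity) (hcb n hn0) (by positivity))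
  · have ha_nonneg (n : ℕ) : 0 ≤ a n := nonneg_of_mul_nonneg_right ((hb n).trans (hba n)) hC
    have h_lim : Tendsto (fun n : ℕ => (C * a n) ^ (1 / n : ℝ)) atTop (𝓝 ρ) := by
      simpa only [one_mul, ← Real.mul_rpow hC.le (ha_nonneg _)] using
        (tendsto_const_rpow_one_div hC).mul ha
    filter_upwards [h_lim.eventually_lt_const hu] with n hn
    exact (Real.rpow_le_rpow (hb n) (hba n) (by positivity)).trans_lt hn

lemma le_geometric_of_le_add {m ε M : ℝ} (hm : 0 ≤ m) (hε : 0 ≤ ε)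
    (hεM : ε < M) (hbM : ∀ n, b (n + i) ≤ M * b n)
    (hab : ∀ n, a (n + i) ≤ m * b n + ε * a n) (n k : ℕ) :
    a (n + k * i) ≤ m / (M - ε) * (M ^ k - ε ^ k) * b n + ε ^ k * a n := by
  have hMε : 0 < M - ε := sub_pos.2 hεM
  induction k generalizing n with
  | zero => simp
  | succ k ih =>
    have h_coeff : 0 ≤ m / (M - ε) * (M ^ k - ε ^ k) :=
      mul_nonneg (by positivity) (sub_nonneg.2 (pow_le_pow_left₀ hε hεM.le k))
    calc a (n + (k + 1) * i) = a (n + i + k * i) := by ring_nf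
      _ ≤ m / (M - ε) * (M ^ k - ε ^ k) * b (n + i) + ε ^ k * a (n + i) := ih (n + i)
      _ ≤ m / (M - ε) * (M ^ k - ε ^ k) * (M * b n) + ε ^ k * (m * b n + ε * a n) := by
        gcongr
        exacts [hbM n, hab n]
      _ = m / (M - ε) * (M ^ (k + 1) - ε ^ (k + 1)) * b n + ε ^ (k + 1) * a n := by
        field_simp
        ring

lemma exists_le_mul_le_add {q : ℕ} (hq : q ≠ 0) (n : ℕ) : ∃ k ≠ 0, n ≤ q * k ∧ q * k ≤ n + q := by
  refine ⟨n / q + 1, Nat.succ_ne_zero _, ?_, ?_⟩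
  · exact (Nat.lt_mul_div_succ n (Nat.pos_of_ne_zero hq)).le
  · rw [mul_add, mul_one]
    exact Nat.add_le_add_right (Nat.mul_div_le n q) q

lemma exists_pow_le_mul_of_le_add {T M : ℝ} (hρ : 0 < ρ) (hρM : ρ ^ i ≤ M) (hb : ∀ n, 0 ≤ b n)
    (hρa : ∀ n ≠ 0, ρ ^ n ≤ a n) (haT : ∀ n ≠ 0, a n ≤ T ^ n) (hbM : ∀ n, b (n + i) ≤ M * b n)
    (hab : ∀ ε > 0, ∃ m > 0, ∀ n, a (n + i) ≤ m * b n + ε * a n) (q : ℕ) :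
    ∃ C > 0, ∀ n ≠ 0, ∀ k ≠ 0, n ≤ q * k → ρ ^ n * (ρ ^ i) ^ k ≤ C * M ^ k * b n := by
  have hρT : ρ ≤ T := by
    simpa only [pow_one] using (hρa 1 one_ne_zero).trans (haT 1 one_ne_zero)
  have hT : 0 < T := hρ.trans_le hρT
  have h_ratio : ρ / T ≤ 1 := (div_le_one hT).2 hρT
  set ε := ρ ^ i * (1 / 2 * (ρ / T) ^ q) with hε_def
  have hε : 0 < ε := by positivity
  have hεM : ε < M := by
    have h_pow : (ρ / T) ^ q ≤ 1 := pow_le_one₀ (by positivity) h_ratio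
    exact (mul_lt_of_lt_one_right (by positivity) (by linarith)).trans_le hρM
  obtain ⟨m, hm, h_step⟩ := hab ε hε
  have hD : 0 < m / (M - ε) := div_pos hm (sub_pos.2 hεM)
  refine ⟨2 * (m / (M - ε)), mul_pos two_pos hD, fun n hn k hk hnk => ?_⟩
  have h_error : ε ^ k * a n ≤ ρ ^ n * (ρ ^ i) ^ k / 2 := by
    calc ε ^ k * a n ≤ ε ^ k * T ^ n := by gcongr; exact haT n hn
      _ = (ρ ^ i) ^ k * ((1 / 2) ^ k * (ρ / T) ^ (q * k)) * T ^ n := by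
        rw [hε_def, mul_pow, mul_pow, pow_mul (ρ / T)]
      _ ≤ (ρ ^ i) ^ k * (1 / 2 * (ρ / T) ^ n) * T ^ n := by
        gcongr ?_ * (?_ * ?_) * ?_
        · exact pow_le_of_le_one (by norm_num) (by norm_num) hk
        · exact pow_le_pow_of_le_one (by positivity) h_ratio hnk
      _ = ρ ^ n * (ρ ^ i) ^ k / 2 := by
        rw [div_pow]
        field_simp
  have h_iter : ρ ^ n * (ρ ^ i) ^ k ≤ m / (M - ε) * M ^ k * b n + ε ^ k * a n := by
    calc ρ ^ n * (ρ ^ i) ^ k = ρ ^ (n + k * i) := by rw [← pow_mul, ← pow_add, mul_comm i]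
      _ ≤ a (n + k * i) := hρa _ (by omega)
      _ ≤ m / (M - ε) * (M ^ k - ε ^ k) * b n + ε ^ k * a n :=
        le_geometric_of_le_add hm.le hε.le hεM hbM h_step n k
      _ ≤ m / (M - ε) * M ^ k * b n + ε ^ k * a n := by
        have hbn : 0 ≤ b n := hb n
        gcongr
        exact sub_le_self _ (by positivity)
  linarith

theorem exists_mul_pow_le_of_le_add {T M s : ℝ} (hb : ∀ n, 0 ≤ b n)
    (hρa : ∀ n ≠ 0, ρ ^ n ≤ a n) (haT : ∀ n ≠ 0, a n ≤ T ^ n) (hbM : ∀ n, b (n + i) ≤ M * b n)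
    (hab : ∀ ε > 0, ∃ m > 0, ∀ n, a (n + i) ≤ m * b n + ε * a n) (hs : 0 < s) (hsρ : s < ρ) :
    ∃ c > 0, ∀ n ≠ 0, c * s ^ n ≤ b n := by
  have hρ : 0 < ρ := hs.trans hsρ
  set L := max M (ρ ^ i)
  have hρL : ρ ^ i ≤ L := le_max_right _ _
  have hL : 0 < L := (pow_pos hρ i).trans_le hρL
  have hbL (n : ℕ) : b (n + i) ≤ L * b n :=
    (hbM n).trans (mul_le_mul_of_nonneg_right (le_max_left _ _) (hb n))
  have h_lt_one : s / ρ < 1 := (div_lt_one hρ).2 hsρ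
  obtain ⟨q, hq⟩ : ∃ q : ℕ, (s / ρ) ^ q < ρ ^ i / L :=
    exists_pow_lt_of_lt_one (by positivity) h_lt_one
  have hq₀ : q ≠ 0 := by
    rintro rfl
    exact (pow_zero (s / ρ) ▸ hq).not_ge ((div_le_one hL).2 hρL)
  obtain ⟨C, hC, h_le⟩ := exists_pow_le_mul_of_le_add hρ hρL hb hρa haT hbL hab q
  refine ⟨(s / ρ) ^ q / C, by positivity, fun n hn => ?_⟩
  obtain ⟨k, hk, hnk, hkn⟩ := exists_le_mul_le_add hq₀ n
  have h_rate : (s / ρ) ^ (n + q) ≤ (ρ ^ i / L) ^ k := by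
    calc (s / ρ) ^ (n + q) ≤ (s / ρ) ^ (q * k) :=
          pow_le_pow_of_le_one (by positivity) h_lt_one.le hkn
      _ = ((s / ρ) ^ q) ^ k := pow_mul _ _ _
      _ ≤ (ρ ^ i / L) ^ k := pow_le_pow_left₀ (by positivity) hq.le k
  calc (s / ρ) ^ q / C * s ^ n = (s / ρ) ^ (n + q) * ρ ^ n / C := by
        rw [pow_add, div_pow s ρ n]
        field_simp
    _ ≤ (ρ ^ i / L) ^ k * ρ ^ n / C := by gcongr
    _ = ρ ^ n * (ρ ^ i) ^ k / (C * L ^ k) := by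
        rw [div_pow]
        field_simp
    _ ≤ b n := by
        rw [div_le_iff₀' (by positivity)]
        exact h_le n hn k hk hnk

end GrowthOfSequences

section NormedLattice

lemma abs_map_le_map_abs {F G H : Type*} [AddGroup G] [Lattice G] [AddGroup H] [Lattice H]
    [FunLike F G H] [AddMonoidHomClass F G H] {φ : F} (hφ : Monotone φ) (x : G) : |φ x| ≤ φ |x| :=
  abs_le'.2 ⟨hφ (le_abs_self x), by rw [← map_neg]; exact hφ (neg_le_abs x)⟩

variable {E : Type*} [NormedAddCommGroup E] [Lattice E] [HasSolidNorm E] [IsOrderedAddMonoid E]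

/-- A quasi-interior point of the positive cone: every element lies below a multiple of `h` up to a
positive part of arbitrarily small norm. For `0 ≤ f` the displayed positive part is `f - f ⊓ m • h`,
so this is the usual requirement `f ⊓ m • h → f`. -/
def IsQuasiInterior (h : E) : Prop :=
  ∀ f : E, Tendsto (fun m : ℕ => (f - m • h)⁺) atTop (𝓝 0)

lemma IsQuasiInterior.exists_forall_norm_posPart_le {h : E} (hh : IsQuasiInterior h) {S : Set E}
    (hS : TotallyBounded S) {ε : ℝ} (hε : 0 < ε) :
    ∃ m : ℕ, 0 < m ∧ ∀ f ∈ S, ‖(f - m • h)⁺‖ ≤ ε := by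
  obtain ⟨t, ht_finite, hSt⟩ := Metric.totallyBounded_iff.1 hS (ε / 2) (by positivity)
  have h_net : ∀ᶠ m : ℕ in atTop, ∀ g ∈ t, ‖(g - m • h)⁺‖ < ε / 2 :=
    (Filter.eventually_all_finite ht_finite).2 fun g _ =>
      (tendsto_zero_iff_norm_tendsto_zero.1 (hh g)).eventually_lt_const (by positivity)
  obtain ⟨m, hm_net, hm_pos⟩ := (h_net.and (eventually_gt_atTop 0)).exists
  refine ⟨m, hm_pos, fun f hf => ?_⟩
  obtain ⟨g, hg, hfg⟩ := Set.mem_iUnion₂.1 (hSt hf)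
  have h_dist : dist (f - m • h)⁺ (g - m • h)⁺ ≤ dist f g := by
    simpa only [NNReal.coe_one, one_mul, dist_sub_right] using
      lipschitzWith_posPart.dist_le_mul (f - m • h) (g - m • h)
  calc ‖(f - m • h)⁺‖ ≤ ‖(g - m • h)⁺‖ + dist (f - m • h)⁺ (g - m • h)⁺ := by
        rw [dist_eq_norm]; exact norm_le_norm_add_norm_sub' _ _
    _ ≤ ε / 2 + ε / 2 := add_le_add (hm_net g hg).le (h_dist.trans (Metric.mem_ball.1 hfg).le)
    _ = ε := add_halves ε

variable [NormedSpace ℝ E] {K : E →L[ℝ] E} {h : E} {i : ℕ}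

lemma norm_pow_add_le_of_isQuasiInterior (hK : Monotone K) (hKi : IsCompactOperator (K ^ i))
    (hh : IsQuasiInterior h) {ε : ℝ} (hε : 0 < ε) :
    ∃ m : ℝ, 0 < m ∧ ∀ n, ‖K ^ (n + i)‖ ≤ m * ‖(K ^ n) h‖ + ε * ‖K ^ n‖ := by
  have hK_pow (n : ℕ) : Monotone (K ^ n : E →L[ℝ] E) := by
    simpa only [FunLike.coe_pow_eq_iterate] using hK.iterate n
  obtain ⟨S, hS_compact, hS⟩ := IsCompactOperator.image_closedBall_subset_compact
    (f := (K ^ i : E →L[ℝ] E).toLinearMap) hKi 1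
  obtain ⟨m, hm_pos, hm⟩ := hh.exists_forall_norm_posPart_le hS_compact.totallyBounded hε
  refine ⟨m, by exact_mod_cast hm_pos, fun n => ?_⟩
  refine ContinuousLinearMap.opNorm_le_of_unit_norm (by positivity) fun f hf => ?_
  set g := (K ^ i) |f|
  have hg : g ∈ S := hS ⟨|f|, by rw [mem_closedBall_zero_iff, norm_abs_eq_norm, hf], rfl⟩
  have h_abs : |(K ^ (n + i)) f| ≤ |m • (K ^ n) h + (K ^ n) (g - m • h)⁺| := by
    calc |(K ^ (n + i)) f| ≤ (K ^ (n + i)) |f| := abs_map_le_map_abs (hK_pow _) f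
      _ = (K ^ n) g := by rw [pow_add]; rfl
      _ ≤ (K ^ n) (m • h + (g - m • h)⁺) :=
        hK_pow n (sub_le_iff_le_add'.1 (le_posPart _))
      _ = m • (K ^ n) h + (K ^ n) (g - m • h)⁺ := by rw [map_add, map_nsmul]
      _ ≤ _ := le_abs_self _
  calc ‖(K ^ (n + i)) f‖ ≤ ‖m • (K ^ n) h + (K ^ n) (g - m • h)⁺‖ :=
        norm_le_norm_of_abs_le_abs h_abs
    _ ≤ ‖m • (K ^ n) h‖ + ‖(K ^ n) (g - m • h)⁺‖ := norm_add_le _ _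
    _ ≤ m * ‖(K ^ n) h‖ + ‖K ^ n‖ * ε :=
      add_le_add norm_nsmul_le ((K ^ n).le_opNorm_of_le (hm g hg))
    _ = m * ‖(K ^ n) h‖ + ε * ‖K ^ n‖ := by rw [mul_comm ε]

theorem tendsto_norm_pow_apply_rpow_specRad (hK : Monotone K) (hKi : IsCompactOperator (K ^ i))
    (hh : IsQuasiInterior h) :
    Tendsto (fun n : ℕ => ‖(K ^ n) h‖ ^ (1 / n : ℝ)) atTop (𝓝 (specRad K)) := by
  refine tendsto_rpow_one_div_of_le_of_pow_le (C := ‖h‖ + 1) (fun n => norm_nonneg _)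
    (tendsto_norm_pow_rpow_specRad K) (by positivity) (fun n => ?_)
    fun s hs hsρ => ?_
  · rw [mul_comm]
    exact (K ^ n).le_opNorm_of_le (le_add_of_nonneg_right zero_le_one)
  · refine exists_mul_pow_le_of_le_add (a := fun n => ‖K ^ n‖) (M := ‖K ^ i‖)
      (fun n => norm_nonneg _) (fun n => specRad_pow_le_norm_pow K)
      (fun n hn => norm_pow_le' K (Nat.pos_of_ne_zero hn)) (fun n => ?_)
      (fun ε => norm_pow_add_le_of_isQuasiInterior hK hKi hh) hs hsρ
    have h_pow : (K ^ (n + i)) h = (K ^ i) ((K ^ n) h) := by rw [add_comm, pow_add]; rfl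
    exact h_pow ▸ (K ^ i).le_opNorm _

end NormedLattice

section Lp

variable {X : Type*} [MeasurableSpace X] {π : Measure X} {p : ℝ≥0∞}

section NormedGroup

variable {F : Type*} [NormedAddCommGroup F]

lemma Lp_norm_eq_integral_norm_rpow (hp₀ : p ≠ 0) (hp_top : p ≠ ⊤) (f : Lp F p π) :
    ‖f‖ = (∫ x, ‖f x‖ ^ p.toReal ∂π) ^ (1 / p.toReal) := by
  rw [Lp.norm_def, toReal_eLpNorm (Lp.aestronglyMeasurable f),
    lpNorm_eq_integral_norm_rpow_toReal hp₀ hp_top (Lp.aestronglyMeasurable f), one_div]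

theorem tendsto_Lp_zero_of_dominated [Fact (1 ≤ p)] (hp_top : p ≠ ⊤) {f : ℕ → Lp F p π}
    {g : X → ℝ} (hg : MemLp g p π) (h_bound : ∀ n, ∀ᵐ x ∂π, ‖f n x‖ ≤ g x)
    (h_lim : ∀ᵐ x ∂π, Tendsto (fun n => f n x) atTop (𝓝 0)) :
    Tendsto f atTop (𝓝 0) := by
  have hp₀ : p ≠ 0 := (one_pos.trans_le (Fact.out : 1 ≤ p)).ne'
  have hp : 0 < p.toReal := ENNReal.toReal_pos hp₀ hp_top
  have h_integral : Tendsto (fun n => ∫ x, ‖f n x‖ ^ p.toReal ∂π) atTop (𝓝 (∫ _, (0 : ℝ) ∂π)) := by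
    refine tendsto_integral_of_dominated_convergence (fun x => ‖g x‖ ^ p.toReal)
      (fun n => ((Lp.memLp (f n)).integrable_norm_rpow hp₀ hp_top).1)
      (hg.integrable_norm_rpow hp₀ hp_top) (fun n => ?_) ?_
    · filter_upwards [h_bound n] with x hx
      rw [Real.norm_of_nonneg (by positivity)]
      exact Real.rpow_le_rpow (norm_nonneg _) (hx.trans (le_abs_self _)) hp.le
    · filter_upwards [h_lim] with x hx
      simpa only [norm_zero, Real.zero_rpow hp.ne'] using hx.norm.rpow_const (Or.inr hp.le)
  rw [tendsto_zero_iff_norm_tendsto_zero]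
  simp only [Lp_norm_eq_integral_norm_rpow hp₀ hp_top]
  simpa only [integral_zero, Real.zero_rpow (one_div_pos.2 hp).ne'] using
    h_integral.rpow_const (Or.inr (one_div_pos.2 hp).le)

end NormedGroup

variable [Fact (1 ≤ p)] {h : Lp ℝ p π}

theorem isQuasiInterior_of_ae_pos (hp_top : p ≠ ⊤) (hh : ∀ᵐ x ∂π, 0 < h x) :
    IsQuasiInterior h := by
  intro f
  have h_coe (m : ℕ) : ∀ᵐ x ∂π, ((f - m • h)⁺ : Lp ℝ p π) x = (f x - m * h x)⁺ := by
    rw [← Nat.cast_smul_eq_nsmul ℝ]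
    filter_upwards [Lp.coeFn_sup (f - (m : ℝ) • h) 0, Lp.coeFn_sub f ((m : ℝ) • h),
      Lp.coeFn_smul (m : ℝ) h, Lp.coeFn_zero ℝ p π] with x h_sup h_sub h_smul h_zero
    simp only [posPart_def, h_sup, Pi.sup_apply, h_sub, Pi.sub_apply, h_smul, Pi.smul_apply,
      smul_eq_mul, h_zero, Pi.zero_apply]
  refine tendsto_Lp_zero_of_dominated hp_top (Lp.memLp f).norm (fun m => ?_) ?_
  · filter_upwards [h_coe m, hh] with x hx hhx
    have h_mul : 0 ≤ m * h x := by positivity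
    rw [hx, Real.norm_of_nonneg (posPart_nonneg _)]
    exact sup_le ((sub_le_self _ h_mul).trans (le_abs_self _)) (abs_nonneg _)
  · filter_upwards [ae_all_iff.2 h_coe, hh] with x hx hhx
    obtain ⟨N, hN⟩ := exists_nat_ge (f x / h x)
    refine tendsto_const_nhds.congr' ?_
    filter_upwards [eventually_ge_atTop N] with m hm
    have h_le : f x ≤ m * h x := (div_le_iff₀ hhx).1 (hN.trans (by exact_mod_cast hm))
    rw [hx, posPart_eq_zero.2 (sub_nonpos.2 h_le)]

theorem monotone_of_ae_pos_map_ae_pos {K : Lp ℝ p π →L[ℝ] Lp ℝ p π}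
    (hK : ∀ f : Lp ℝ p π, (∀ᵐ x ∂π, 0 < f x) → ∀ᵐ x ∂π, 0 < K f x) (hh : ∀ᵐ x ∂π, 0 < h x) :
    Monotone K := by
  refine (monotone_iff_map_nonneg K).2 fun f hf => ?_
  have h_perturbed : ∀ ε > (0 : ℝ), 0 ≤ K (f + ε • h) := by
    intro ε hε
    have h_pos : ∀ᵐ x ∂π, 0 < (f + ε • h : Lp ℝ p π) x := by
      filter_upwards [Lp.coeFn_add f (ε • h), Lp.coeFn_smul ε h, (Lp.coeFn_nonneg f).2 hf, hh]
        with x h_add h_smul hfx hhx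
      rw [h_add, Pi.add_apply, h_smul, Pi.smul_apply, smul_eq_mul]
      exact add_pos_of_nonneg_of_pos hfx (mul_pos hε hhx)
    exact (Lp.coeFn_nonneg _).1 ((hK _ h_pos).mono fun _ => le_of_lt)
  have h_cont : Continuous fun ε : ℝ => K (f + ε • h) := by fun_prop
  have h_lim : Tendsto (fun ε : ℝ => K (f + ε • h)) (𝓝[>] 0) (𝓝 (K f)) := by
    simpa only [zero_smul, add_zero] using (h_cont.tendsto 0).mono_left nhdsWithin_le_nhds
  exact ge_of_tendsto h_lim (eventually_mem_nhdsWithin.mono h_perturbed)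

theorem specRad_eq_lim_integral_iterates_general (hp_top : p ≠ ⊤) {K : Lp ℝ p π →L[ℝ] Lp ℝ p π}
    (hK : Monotone K) {i : ℕ} (hKi : IsCompactOperator (K ^ i)) (hh : ∀ᵐ x ∂π, 0 < h x) :
    Tendsto (fun n : ℕ => (∫ x, |(K ^ n) h x| ^ p.toReal ∂π) ^ (1 / (p.toReal * n)))
      atTop (𝓝 (specRad K)) := by
  have hp₀ : p ≠ 0 := (one_pos.trans_le (Fact.out : 1 ≤ p)).ne'
  have h_root (n : ℕ) : (∫ x, |(K ^ n) h x| ^ p.toReal ∂π) ^ (1 / (p.toReal * n)) =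
      ‖(K ^ n) h‖ ^ (1 / n : ℝ) := by
    rw [Lp_norm_eq_integral_norm_rpow hp₀ hp_top, ← Real.rpow_mul (by positivity),
      one_div_mul_one_div]
    rfl
  simpa only [h_root] using
    tendsto_norm_pow_apply_rpow_specRad hK hKi (isQuasiInterior_of_ae_pos hp_top hh)

end Lp

/-- **Local spectral radius formula for eventually compact, strictly positive
operators.**  Let `(X, F, π)` be a probability space, `p ∈ [1, ∞)`, and `K` a
bounded linear operator on `L_p(X,π)` such that `K^i` is compact for some
`i ∈ ℕ` and `K f > 0` π-a.e. whenever `f > 0` π-a.e.  Then for every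
`h ∈ L_p(X,π)` with `h > 0` π-a.e.,
`ρ(K) = lim_n ( ∫ |K^n h|^p dπ )^(1/(p n))`. -/
theorem specRad_eq_lim_integral_iterates
    {X : Type*} [MeasurableSpace X] (π : Measure X) [IsProbabilityMeasure π]
    (p : ℝ≥0∞) [Fact (1 ≤ p)] (hp_top : p ≠ ⊤)
    (K : Lp ℝ p π →L[ℝ] Lp ℝ p π)
    (hK_evcompact : ∃ i : ℕ, 0 < i ∧ IsCompactOperator ⇑(K ^ i))
    (hK_pos : ∀ f : Lp ℝ p π, (∀ᵐ x ∂π, 0 < f x) → ∀ᵐ x ∂π, 0 < (K f : X → ℝ) x)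
    (h : Lp ℝ p π) (hh : ∀ᵐ x ∂π, 0 < h x) :
    Tendsto
      (fun n : ℕ =>
        (∫ x, |((K ^ n) h : X → ℝ) x| ^ p.toReal ∂π) ^ (1 / (p.toReal * n)))
      atTop (𝓝 (specRad K)) := by
  obtain ⟨i, -, hKi⟩ := hK_evcompact
  exact specRad_eq_lim_integral_iterates_general hp_top
    (monotone_of_ae_pos_map_ae_pos hK_pos hh) hKi hh
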